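/- There exists a universal constant C < ∞ (independent of n and d) such that for all integers n ≥ 8, d ≥ 3 and every subset A ⊆ [2^n]^d, one has Σ_{k=8}^n E[|ν_k(A)|] ≤ C·Per(A). -/

import Mathlib

open MeasureTheory Finset

noncomputable section

/-- Points of the grid `[2^n]^d` (coordinates taken 0-based). -/
abbrev GridPt (n d : ℕ) := Fin d → Fin (2^n)

/-- Normalized counting "volume" of a subset of the grid: `Vol(A) = 2^{-nd}|A|`. -/
def Vol (n d : ℕ) (A : Finset (GridPt n d)) : ℝ := (A.card : ℝ) / 2^(n*d)

/-- The ℓ1 metric on the grid. -/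
def gdist {n d : ℕ} (u v : GridPt n d) : ℝ := ∑ i, |((u i : ℕ) : ℝ) - ((v i : ℕ) : ℝ)|

/-- Indices of the dyadic cubes in `D_k`. -/
abbrev CubeIdx (d k : ℕ) := Fin d → Fin (2^k)

/-- The dyadic cube of side-cardinality `2^(n-k)` indexed by `j ∈ {0,…,2^k-1}^d`. -/
def cube (n d k : ℕ) (j : CubeIdx d k) : Finset (GridPt n d) :=
  Finset.univ.filter (fun x => ∀ i, (x i : ℕ) / 2^(n-k) = (j i : ℕ))

/-- `p = 2^{-4d}`. -/
def pp (d : ℕ) : ℝ := ((2:ℝ)^(4*d))⁻¹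

/-- The law of each `X_Q`: takes values `±1` with probability `p/2` each
and `0` with probability `1-p`. -/
def stepMeasure (d : ℕ) : Measure ℝ :=
  (Real.toNNReal (pp d / 2)) • Measure.dirac (1:ℝ)
  + (Real.toNNReal (pp d / 2)) • Measure.dirac (-1:ℝ)
  + (Real.toNNReal (1 - pp d)) • Measure.dirac (0:ℝ)

instance (d : ℕ) : IsFiniteMeasure (stepMeasure d) := by
  unfold stepMeasure; infer_instance

/-- The joint law of the i.i.d. family `{X_Q}_{Q ∈ D_k}`; a sample point
`ω : CubeIdx d k → ℝ` records the values `X_Q = ω Q`. -/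
def prodMeasure (d k : ℕ) : Measure (CubeIdx d k → ℝ) :=
  Measure.pi fun _ => stepMeasure d

/-- `μ_k(A) = ∑_{Q ∈ D_k} p⁻¹ 2^k X_Q Vol(A ∩ Q)`, as a function of the sample point `ω`. -/
def muMeas (n d k : ℕ) (A : Finset (GridPt n d)) (ω : CubeIdx d k → ℝ) : ℝ :=
  ∑ j : CubeIdx d k, (pp d)⁻¹ * 2^k * ω j * Vol n d (A ∩ cube n d k j)

/-- `ν_k(A) = μ_k(A) - μ_k([2^n]^d)·Vol(A)`. -/
def nuMeas (n d k : ℕ) (A : Finset (GridPt n d)) (ω : CubeIdx d k → ℝ) : ℝ :=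
  muMeas n d k A ω - muMeas n d k Finset.univ ω * Vol n d A

/-- Ordered edges of the grid graph (each unordered edge `{u, u+e_i}` listed exactly once,
in the increasing direction). -/
def edgePairs (n d : ℕ) : Finset (GridPt n d × GridPt n d) :=
  Finset.univ.filter (fun e =>
    ∃ i, ((e.2 i : ℕ) = (e.1 i : ℕ) + 1) ∧ ∀ j, j ≠ i → e.2 j = e.1 j)

/-- The edge boundary `∂A` of a subset `A` of the grid. -/
def bdry (n d : ℕ) (A : Finset (GridPt n d)) : Finset (GridPt n d × GridPt n d) :=
  (edgePairs n d).filter (fun e => (e.1 ∈ A ∧ e.2 ∉ A) ∨ (e.1 ∉ A ∧ e.2 ∈ A))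

/-- The normalized perimeter `Per(A) = (1/d)·2^{-n(d-1)}·|∂A|`. -/
def Per (n d : ℕ) (A : Finset (GridPt n d)) : ℝ :=
  (1/(d:ℝ)) * ((2:ℝ)^(n*(d-1)))⁻¹ * ((bdry n d A).card : ℝ)


lemma pp_pos (d : ℕ) : 0 < pp d := by unfold pp; positivity

lemma pp_le_one (d : ℕ) : pp d ≤ 1 := by
  unfold pp
  exact inv_le_one_of_one_le₀ (one_le_pow₀ (by norm_num))

instance stepMeasure_isProb (d : ℕ) : IsProbabilityMeasure (stepMeasure d) := by
  constructor
  have h1 := pp_pos d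
  have h2 := pp_le_one d
  simp only [stepMeasure, Measure.coe_add, Pi.add_apply, Measure.smul_apply, measure_univ]
  simp only [ENNReal.smul_def, smul_eq_mul, mul_one]
  rw [← ENNReal.coe_add, ← ENNReal.coe_add, ← Real.toNNReal_add (by positivity) (by positivity),
    ← Real.toNNReal_add (by positivity) (by linarith)]
  norm_num

lemma integral_step (d : ℕ) (f : ℝ → ℝ) :
    ∫ x, f x ∂(stepMeasure d) = pp d / 2 * f 1 + pp d / 2 * f (-1) + (1 - pp d) * f 0 := by
  have h1 := pp_pos d
  have h2 := pp_le_one d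
  have hi : ∀ (c : NNReal) (a : ℝ), Integrable f (c • Measure.dirac a) := by
    intro c a
    have : Integrable f (Measure.dirac a) := integrable_dirac (by simp)
    exact this.smul_measure_nnreal
  unfold stepMeasure
  rw [integral_add_measure ((hi _ _).add_measure (hi _ _)) (hi _ _),
    integral_add_measure (hi _ _) (hi _ _)]
  simp only [integral_smul_nnreal_measure, integral_dirac, NNReal.smul_def, smul_eq_mul]
  rw [Real.coe_toNNReal _ (by positivity), Real.coe_toNNReal _ (by linarith)]

lemma memLp_step (d : ℕ) (f : ℝ → ℝ) (hf : Measurable f) (q : ENNReal) :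
    MemLp f q (stepMeasure d) := by
  have h : ∀ᵐ x ∂(stepMeasure d), ‖f x‖ ≤ max (max ‖f 1‖ ‖f (-1)‖) ‖f 0‖ := by
    unfold stepMeasure
    rw [ae_add_measure_iff, ae_add_measure_iff]
    have key : ∀ (c : NNReal) (a : ℝ), ‖f a‖ ≤ max (max ‖f 1‖ ‖f (-1)‖) ‖f 0‖ →
        ∀ᵐ x ∂(c • Measure.dirac a), ‖f x‖ ≤ max (max ‖f 1‖ ‖f (-1)‖) ‖f 0‖ := by
      intro c a h
      have h' : ∀ᵐ x ∂(Measure.dirac a), ‖f x‖ ≤ max (max ‖f 1‖ ‖f (-1)‖) ‖f 0‖ := by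
        rw [ae_dirac_eq]; exact h
      exact Measure.ae_smul_measure h' c
    refine ⟨⟨key _ _ ?_, key _ _ ?_⟩, key _ _ ?_⟩ <;> simp
  exact MemLp.of_bound hf.aestronglyMeasurable _ h

instance prodMeasure_isProb (d k : ℕ) : IsProbabilityMeasure (prodMeasure d k) := by
  unfold prodMeasure; infer_instance

lemma memLp_coord (d k : ℕ) (j : CubeIdx d k) (c : ℝ) :
    MemLp (fun ω : CubeIdx d k → ℝ => c * ω j) 2 (prodMeasure d k) := by
  have h := memLp_step d (fun x => c * x) (by fun_prop) 2
  exact h.comp_measurePreserving (measurePreserving_eval (fun _ => stepMeasure d) j)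

lemma integral_coord (d k : ℕ) (j : CubeIdx d k) (f : ℝ → ℝ) (hf : Measurable f) :
    ∫ ω, f (ω j) ∂(prodMeasure d k) = ∫ x, f x ∂(stepMeasure d) := by
  have h := measurePreserving_eval (fun _ : CubeIdx d k => stepMeasure d) j
  rw [← h.map_eq, integral_map h.measurable.aemeasurable hf.aestronglyMeasurable]
  rfl

lemma L1_bound (d k : ℕ) (c : CubeIdx d k → ℝ) :
    ∫ ω, |∑ j, c j * ω j| ∂(prodMeasure d k) ≤ pp d * ∑ j, |c j| := by
  have hint : ∀ j, Integrable (fun ω : CubeIdx d k → ℝ => |c j * ω j|) (prodMeasure d k) :=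
    fun j => ((memLp_coord d k j (c j)).integrable (by norm_num)).abs
  calc ∫ ω, |∑ j, c j * ω j| ∂(prodMeasure d k)
      ≤ ∫ ω, ∑ j, |c j * ω j| ∂(prodMeasure d k) := by
        apply integral_mono
        · exact (integrable_finsetSum _ fun j _ =>
            (memLp_coord d k j (c j)).integrable (by norm_num)).abs
        · exact integrable_finsetSum _ fun j _ => hint j
        · intro ω; exact Finset.abs_sum_le_sum_abs _ _
    _ = ∑ j, pp d * |c j| := by
        rw [integral_finsetSum _ fun j _ => hint j]
        refine Finset.sum_congr rfl fun j _ => ?_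
        rw [integral_coord d k j (fun x => |c j * x|) (by fun_prop), integral_step]
        simp; ring
    _ = _ := by rw [Finset.mul_sum]

lemma L2_bound (d k : ℕ) (c : CubeIdx d k → ℝ) :
    (∫ ω, |∑ j, c j * ω j| ∂(prodMeasure d k)) ^ 2 ≤ pp d * ∑ j, c j ^ 2 := by
  have hm : MemLp (fun ω : CubeIdx d k → ℝ => ∑ j, c j * ω j) 2 (prodMeasure d k) :=
    memLp_finsetSum _ fun j _ => memLp_coord d k j (c j)
  have hv := ProbabilityTheory.variance_nonneg
    (fun ω : CubeIdx d k → ℝ => |∑ j, c j * ω j|) (prodMeasure d k)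
  have hma : MemLp (fun ω : CubeIdx d k → ℝ => |∑ j, c j * ω j|) 2 (prodMeasure d k) := hm.abs
  rw [ProbabilityTheory.variance_eq_sub hma] at hv
  have hv2 := ProbabilityTheory.variance_eq_sub hm
  have h0 : ∫ ω, (∑ j, c j * ω j) ∂(prodMeasure d k) = 0 := by
    rw [integral_finsetSum _ fun j _ => (memLp_coord d k j (c j)).integrable (by norm_num)]
    refine Finset.sum_eq_zero fun j _ => ?_
    rw [integral_coord d k j (fun x => c j * x) (by fun_prop), integral_step]
    ring
  have hs := ProbabilityTheory.variance_sum_pi (ι := CubeIdx d k)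
    (μ := fun _ => stepMeasure d) (X := fun j x => c j * x)
    (fun j => memLp_step d _ (by fun_prop) 2)
  have he : (∑ j : CubeIdx d k, fun ω : CubeIdx d k → ℝ => c j * ω j)
      = fun ω => ∑ j, c j * ω j := by ext ω; simp
  rw [he] at hs
  have hvar : ∀ j, ProbabilityTheory.variance (fun x => c j * x) (stepMeasure d)
      = pp d * c j ^ 2 := by
    intro j
    rw [ProbabilityTheory.variance_eq_sub (memLp_step d _ (by fun_prop) 2)]
    rw [integral_step]
    simp only [Pi.pow_apply]
    rw [integral_step]
    ring
  simp only [hvar] at hs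
  rw [← Finset.mul_sum] at hs
  rw [← hs]
  change _ ≤ ProbabilityTheory.variance _ (prodMeasure d k)
  rw [hv2, h0]
  simp only [Pi.pow_apply, sq_abs] at hv ⊢
  linarith

lemma amgm_fin (s : ℕ) (z : Fin (s+1) → ℝ) (hz : ∀ i, 0 ≤ z i) :
    ∏ i, z i ≤ ((∑ i, z i) / (s+1)) ^ (s+1) := by
  have hs : (0:ℝ) < (s:ℝ) + 1 := by positivity
  have h := Real.geom_mean_le_arith_mean_weighted Finset.univ
    (fun _ : Fin (s+1) => 1 / ((s:ℝ)+1)) z (fun _ _ => by positivity)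
    (by simp; field_simp) (fun i _ => hz i)
  have h2 : ∏ i, z i = (∏ i, z i ^ (1 / ((s:ℝ)+1))) ^ (s+1) := by
    rw [← Finset.prod_pow]
    refine Finset.prod_congr rfl fun i _ => ?_
    rw [← Real.rpow_natCast, ← Real.rpow_mul (hz i)]
    push_cast
    rw [one_div_mul_cancel hs.ne', Real.rpow_one]
  rw [h2]
  refine pow_le_pow_left₀ (Finset.prod_nonneg fun i _ => Real.rpow_nonneg (hz i) _) ?_ _
  refine h.trans (le_of_eq ?_)
  rw [← Finset.mul_sum]; ring

lemma holder_fin {τ : Type*} [Fintype τ] (s : ℕ) (a : τ → ℝ) (b : Fin (s+1) → τ → ℝ) (c : ℝ)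
    (hc : 0 ≤ c) (ha : ∀ t, 0 ≤ a t) (hb : ∀ i t, 0 ≤ b i t)
    (h : ∀ t, a t ^ (s+1) ≤ c * ∏ i, b i t) :
    (∑ t, a t) ^ (s+1) ≤ c * ∏ i, ∑ t, b i t := by
  have hs : (0:ℝ) < (s:ℝ) + 1 := by positivity
  set S : Fin (s+1) → ℝ := fun i => ∑ t, b i t with hS
  have hS0 : ∀ i, 0 ≤ S i := fun i => Finset.sum_nonneg fun t _ => hb i t
  have hR : 0 ≤ c * ∏ i, S i := mul_nonneg hc (Finset.prod_nonneg fun i _ => hS0 i)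
  by_cases hz : c * ∏ i, S i = 0
  · have ha0 : ∀ t, a t = 0 := by
      intro t
      have h1 : a t ^ (s+1) ≤ 0 := by
        refine (h t).trans ?_
        rw [← hz]
        refine mul_le_mul_of_nonneg_left (Finset.prod_le_prod (fun i _ => hb i t) fun i _ => ?_) hc
        exact Finset.single_le_sum (f := fun t => b i t) (fun t _ => hb i t) (Finset.mem_univ t)
      have h2 : a t ^ (s+1) = 0 := le_antisymm h1 (pow_nonneg (ha t) _)
      exact pow_eq_zero_iff (by omega) |>.1 h2
    simp [ha0]
    exact hR
  · have hpos : 0 < c * ∏ i, S i := lt_of_le_of_ne hR (Ne.symm hz)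
    have hSp : ∀ i, 0 < S i := by
      intro i
      refine lt_of_le_of_ne (hS0 i) fun h0 => hz ?_
      rw [Finset.prod_eq_zero (Finset.mem_univ i) h0.symm, mul_zero]
    set G : ℝ := (c * ∏ i, S i) ^ (1 / ((s:ℝ)+1)) with hG
    have hGp : 0 < G := Real.rpow_pos_of_pos hpos _
    have hGs : G ^ (s+1) = c * ∏ i, S i := by
      rw [hG, ← Real.rpow_natCast, ← Real.rpow_mul hR]
      push_cast
      rw [one_div_mul_cancel hs.ne', Real.rpow_one]
    have key : ∀ t, a t ≤ G * ((∑ i, b i t / S i) / (s+1)) := by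
      intro t
      have hnn : ∀ i, 0 ≤ b i t / S i := fun i => div_nonneg (hb i t) (hS0 i)
      refine le_of_pow_le_pow_left₀ (n := s+1) (by omega) ?_ ?_
      · exact mul_nonneg hGp.le (div_nonneg (Finset.sum_nonneg fun i _ => hnn i) hs.le)
      · rw [mul_pow, hGs]
        refine le_trans ?_ (mul_le_mul_of_nonneg_left (amgm_fin s _ hnn) hR)
        rw [Finset.prod_div_distrib]
        refine (h t).trans (le_of_eq ?_)
        have : ∏ i, S i ≠ 0 := (Finset.prod_pos fun i _ => hSp i).ne'
        field_simp
    rw [← hGs]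
    refine pow_le_pow_left₀ (Finset.sum_nonneg fun t _ => ha t) ?_ _
    refine (Finset.sum_le_sum fun t _ => key t).trans (le_of_eq ?_)
    rw [← Finset.mul_sum, ← Finset.sum_div, Finset.sum_comm]
    have : ∀ i, ∑ t, b i t / S i = 1 := by
      intro i
      rw [← Finset.sum_div]
      exact div_self (hSp i).ne'
    simp only [this]
    simp
    field_simp

/-- size of the projection of `A` in direction `i` -/
def prj {α : Type*} [DecidableEq α] (a0 : α) {d : ℕ} (i : Fin d) (A : Finset (Fin d → α)) : ℕ :=
  (A.image (fun x => Function.update x i a0)).card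

/-- slices of `A` -/
def lwSlice {α : Type*} [DecidableEq α] [Fintype α] {d : ℕ} (A : Finset (Fin (d+1) → α)) (t : α) :
    Finset (Fin d → α) :=
  Finset.univ.filter fun y => (Fin.cons t y : Fin (d+1) → α) ∈ A

lemma card_eq_sum_slice {α : Type*} [DecidableEq α] [Fintype α] {d : ℕ}
    (A : Finset (Fin (d+1) → α)) : A.card = ∑ t, (lwSlice A t).card := by
  rw [Finset.card_eq_sum_card_fiberwise (f := fun x => x 0) (t := Finset.univ) (by intro; simp)]
  refine Finset.sum_congr rfl fun t _ => ?_
  refine Finset.card_bij' (fun x _ => Fin.tail x) (fun y _ => Fin.cons t y) ?_ ?_ ?_ ?_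
  · intro x hx
    simp only [Finset.mem_filter] at hx
    simp only [lwSlice, Finset.mem_filter, Finset.mem_univ, true_and]
    rw [← hx.2, Fin.cons_self_tail]; exact hx.1
  · intro y hy
    simpa [lwSlice] using hy
  · intro x hx
    simp only [Finset.mem_filter] at hx
    rw [← hx.2, Fin.cons_self_tail]
  · intro y hy; simp

lemma slice_card_le_prj {α : Type*} [DecidableEq α] [Fintype α] (a0 : α) {d : ℕ}
    (A : Finset (Fin (d+1) → α)) (t : α) : (lwSlice A t).card ≤ prj a0 0 A := by
  unfold prj
  refine Finset.card_le_card_of_injOn (fun y => Fin.cons a0 y) ?_ ?_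
  · intro y hy
    simp only [lwSlice, Finset.coe_filter, Finset.mem_univ, true_and, Set.mem_ofPred_eq] at hy
    simp only [Finset.coe_image, Set.mem_image, Finset.mem_coe]
    exact ⟨_, hy, by rw [Fin.update_cons_zero]⟩
  · intro y _ z _ h
    exact Fin.cons_right_injective (α := fun _ => α) a0 h

lemma sum_prj_slice {α : Type*} [DecidableEq α] [Fintype α] (a0 : α) {d : ℕ} (i : Fin d)
    (A : Finset (Fin (d+1) → α)) : prj a0 i.succ A = ∑ t, prj a0 i (lwSlice A t) := by
  unfold prj
  rw [card_eq_sum_slice]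
  refine Finset.sum_congr rfl fun t _ => ?_
  congr 1
  ext y
  simp only [lwSlice, Finset.mem_filter, Finset.mem_univ, true_and, Finset.mem_image]
  constructor
  · rintro ⟨x, hx, hxy⟩
    have h0 : x 0 = t := by
      have := congrFun hxy 0
      rw [Function.update_of_ne (Fin.succ_ne_zero i).symm] at this
      simpa using this
    refine ⟨Fin.tail x, by rw [← h0, Fin.cons_self_tail]; exact hx, ?_⟩
    have := congrArg Fin.tail hxy
    rw [Fin.tail_update_succ] at this
    simpa using this
  · rintro ⟨z, hz, hzy⟩
    exact ⟨_, hz, by rw [← Fin.cons_update, hzy]⟩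

lemma loomis_whitney {α : Type*} [DecidableEq α] [Fintype α] (a0 : α) (d : ℕ) :
    ∀ A : Finset (Fin (d+1) → α), A.Nonempty →
      (A.card : ℝ) ^ d ≤ ∏ i, (prj a0 i A : ℝ) := by
  induction d with
  | zero =>
    intro A hA
    rw [pow_zero, Fin.prod_univ_one]
    have : 0 < prj a0 0 A := Finset.card_pos.2 (hA.image _)
    exact_mod_cast this
  | succ d ih =>
    intro A hA
    rw [Fin.prod_univ_succ, card_eq_sum_slice]
    simp only [sum_prj_slice]
    push_cast
    refine holder_fin d _ (fun i t => (prj a0 i (lwSlice A t) : ℝ)) _ (by positivity)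
      (fun t => by positivity) (fun i t => by positivity) ?_
    intro t
    rcases (lwSlice A t).eq_empty_or_nonempty with h | h
    · simp only [h, Finset.card_empty, Nat.cast_zero]
      rw [zero_pow (by omega)]
      positivity
    · rw [pow_succ']
      have h1 : ((lwSlice A t).card : ℝ) ≤ prj a0 0 A := by
        exact_mod_cast slice_card_le_prj a0 A t
      exact mul_le_mul h1 (ih _ h) (by positivity) (by positivity)

lemma card_block (n k : ℕ) (hk : k ≤ n) (a : Fin (2^k)) :
    (Finset.univ.filter (fun x : Fin (2^n) => (x : ℕ) / 2^(n-k) = (a : ℕ))).card = 2^(n-k) := by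
  have hN : 2^n = 2^k * 2^(n-k) := by rw [← pow_add]; congr 1; omega
  have hpos : 0 < 2^(n-k) := by positivity
  have hb : ∀ r, r < 2^(n-k) → (a:ℕ) * 2^(n-k) + r < 2^n := by
    intro r hr
    have := a.2
    calc (a:ℕ) * 2^(n-k) + r < ((a:ℕ)+1) * 2^(n-k) := by rw [add_mul]; omega
      _ ≤ 2^k * 2^(n-k) := Nat.mul_le_mul_right _ this
      _ = 2^n := hN.symm
  symm
  refine (Finset.card_range (2^(n-k))).symm.trans ?_
  refine Finset.card_bij (fun r hr => ⟨(a:ℕ) * 2^(n-k) + r, hb r (Finset.mem_range.1 hr)⟩) ?_ ?_ ?_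
  · intro r hr
    simp only [Finset.mem_filter, Finset.mem_univ, true_and]
    rw [mul_comm, Nat.mul_add_div hpos, Nat.div_eq_of_lt (Finset.mem_range.1 hr), add_zero]
  · intro r _ s _ h
    simp only [Fin.mk.injEq] at h
    omega
  · intro x hx
    simp only [Finset.mem_filter, Finset.mem_univ, true_and] at hx
    refine ⟨(x:ℕ) % 2^(n-k), Finset.mem_range.2 (Nat.mod_lt _ hpos), ?_⟩
    ext
    simp only
    rw [← hx, mul_comm]
    exact Nat.div_add_mod _ _

lemma card_cube (n d k : ℕ) (hk : k ≤ n) (j : CubeIdx d k) :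
    (cube n d k j).card = 2^((n-k)*d) := by
  have : cube n d k j = Fintype.piFinset (fun i =>
      Finset.univ.filter (fun x : Fin (2^n) => (x : ℕ) / 2^(n-k) = (j i : ℕ))) := by
    ext x; simp [cube]
  rw [this, Fintype.card_piFinset]
  simp only [card_block n k hk]
  simp [← pow_mul]

lemma vol_univ_cube (n d k : ℕ) (hk : k ≤ n) (j : CubeIdx d k) :
    Vol n d (Finset.univ ∩ cube n d k j) = ((2:ℝ)^(k*d))⁻¹ := by
  unfold Vol
  rw [Finset.univ_inter, card_cube n d k hk]
  have : n * d = (n-k)*d + k*d := by rw [← add_mul]; congr 1; omega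
  rw [this, pow_add]
  push_cast
  field_simp

lemma sum_vol_cube (n d k : ℕ) (hk : k ≤ n) (A : Finset (GridPt n d)) :
    ∑ j, Vol n d (A ∩ cube n d k j) = Vol n d A := by
  unfold Vol
  rw [← Finset.sum_div, ← Nat.cast_sum]
  congr 2
  have hN : 2^n = 2^k * 2^(n-k) := by rw [← pow_add]; congr 1; omega
  let f : GridPt n d → CubeIdx d k := fun x i =>
    ⟨(x i : ℕ) / 2^(n-k), by
      rw [Nat.div_lt_iff_lt_mul (by positivity), ← hN]; exact (x i).2⟩
  rw [Finset.card_eq_sum_card_fiberwise (f := f) (t := Finset.univ) (by intro; simp)]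
  refine Finset.sum_congr rfl fun j _ => ?_
  congr 1
  ext x
  simp only [cube, Finset.mem_inter, Finset.mem_filter, Finset.mem_univ, true_and, f]
  refine and_congr_right fun _ => ?_
  constructor
  · intro h; funext i; exact Fin.ext (h i)
  · intro h i; rw [← h]

lemma vol_nonneg (n d : ℕ) (A : Finset (GridPt n d)) : 0 ≤ Vol n d A := by
  unfold Vol; positivity

lemma vol_mono (n d : ℕ) {A B : Finset (GridPt n d)} (h : A ⊆ B) : Vol n d A ≤ Vol n d B := by
  unfold Vol
  have := Finset.card_le_card h
  gcongr

lemma nu_eq (n d k : ℕ) (hk : k ≤ n) (A : Finset (GridPt n d)) (ω : CubeIdx d k → ℝ) :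
    nuMeas n d k A ω = ∑ j, ((pp d)⁻¹ * 2^k *
      (Vol n d (A ∩ cube n d k j) - ((2:ℝ)^(k*d))⁻¹ * Vol n d A)) * ω j := by
  unfold nuMeas muMeas
  rw [Finset.sum_mul, ← Finset.sum_sub_distrib]
  refine Finset.sum_congr rfl fun j _ => ?_
  rw [vol_univ_cube n d k hk]
  ring

lemma card_cubeIdx (d k : ℕ) : (Fintype.card (CubeIdx d k) : ℝ) = 2^(k*d) := by
  simp [← pow_mul]

lemma nu_L1 (n d k : ℕ) (hk : k ≤ n) (A : Finset (GridPt n d)) :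
    ∫ ω, |nuMeas n d k A ω| ∂(prodMeasure d k) ≤ 2^(k+1) * Vol n d A := by
  simp only [nu_eq n d k hk A]
  refine (L1_bound d k _).trans ?_
  have hp := pp_pos d
  have h1 : ∀ j, |(pp d)⁻¹ * 2^k * (Vol n d (A ∩ cube n d k j) - ((2:ℝ)^(k*d))⁻¹ * Vol n d A)|
      ≤ (pp d)⁻¹ * 2^k * (Vol n d (A ∩ cube n d k j) + ((2:ℝ)^(k*d))⁻¹ * Vol n d A) := by
    intro j
    rw [abs_mul, abs_of_nonneg (by positivity : (0:ℝ) ≤ (pp d)⁻¹ * 2^k)]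
    refine mul_le_mul_of_nonneg_left ?_ (by positivity)
    have a1 := vol_nonneg n d (A ∩ cube n d k j)
    have a2 : 0 ≤ ((2:ℝ)^(k*d))⁻¹ * Vol n d A := mul_nonneg (by positivity) (vol_nonneg n d A)
    rw [abs_le]; constructor <;> linarith
  refine (mul_le_mul_of_nonneg_left (Finset.sum_le_sum fun j _ => h1 j) hp.le).trans ?_
  rw [← Finset.mul_sum, Finset.sum_add_distrib, sum_vol_cube n d k hk, Finset.sum_const,
    Finset.card_univ, nsmul_eq_mul, card_cubeIdx]
  apply le_of_eq
  field_simp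
  ring

lemma nu_L2 (n d k : ℕ) (hk : k ≤ n) (A : Finset (GridPt n d)) :
    (∫ ω, |nuMeas n d k A ω| ∂(prodMeasure d k))^2
      ≤ 2^(4*d) * 4^k * ((2:ℝ)^(k*d))⁻¹ * Vol n d A := by
  simp only [nu_eq n d k hk A]
  refine (L2_bound d k _).trans ?_
  have hp := pp_pos d
  set m := Vol n d A with hm
  set q := ((2:ℝ)^(k*d))⁻¹ with hq
  have hq0 : 0 < q := by positivity
  have hqN : q * 2^(k*d) = 1 := by rw [hq]; field_simp
  have hm0 : 0 ≤ m := vol_nonneg n d A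
  have key : ∑ j, (Vol n d (A ∩ cube n d k j) - q * m)^2 ≤ q * m := by
    have e : ∀ j, (Vol n d (A ∩ cube n d k j) - q * m)^2
        ≤ q * Vol n d (A ∩ cube n d k j) - 2 * q * m * Vol n d (A ∩ cube n d k j)
          + q^2 * m^2 := by
      intro j
      have a1 := vol_nonneg n d (A ∩ cube n d k j)
      have a2 : Vol n d (A ∩ cube n d k j) ≤ q := by
        rw [hq, ← vol_univ_cube n d k hk j]
        exact vol_mono n d (Finset.inter_subset_inter_right (Finset.subset_univ _))
      nlinarith
    refine (Finset.sum_le_sum fun j _ => e j).trans ?_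
    rw [Finset.sum_add_distrib, Finset.sum_sub_distrib, ← Finset.mul_sum, ← Finset.mul_sum,
      sum_vol_cube n d k hk, Finset.sum_const, Finset.card_univ, nsmul_eq_mul, card_cubeIdx,
      ← hm]
    have : (2:ℝ)^(k*d) * (q^2 * m^2) = q * m^2 := by
      calc (2:ℝ)^(k*d) * (q^2 * m^2) = (q * 2^(k*d)) * (q * m^2) := by ring
        _ = _ := by rw [hqN, one_mul]
    rw [this]
    nlinarith [mul_nonneg hq0.le (sq_nonneg m)]
  simp only [mul_pow]
  rw [← Finset.mul_sum]
  have hpi : pp d * ((pp d)⁻¹^2) = 2^(4*d) := by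
    have : (pp d)⁻¹ = 2^(4*d) := by unfold pp; rw [inv_inv]
    rw [← this]; field_simp
  have h4 : ((2:ℝ)^k)^2 = 4^k := by rw [← pow_mul, mul_comm, pow_mul]; norm_num
  calc pp d * ((pp d)⁻¹^2 * (2^k)^2 * ∑ j, (Vol n d (A ∩ cube n d k j) - q * m)^2)
      = 2^(4*d) * 4^k * ∑ j, (Vol n d (A ∩ cube n d k j) - q * m)^2 := by
        rw [← hpi, ← h4]; ring
    _ ≤ 2^(4*d) * 4^k * (q * m) := mul_le_mul_of_nonneg_left key (by positivity)
    _ = _ := by ring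

lemma exists_switch (N : ℕ) (g : ℕ → Prop) (a b : ℕ) (ha : a < N) (hb : b < N)
    (hga : g a) (hgb : ¬ g b) :
    ∃ t, t + 1 < N ∧ ((g t ∧ ¬ g (t+1)) ∨ (¬ g t ∧ g (t+1))) := by
  by_contra hcon
  push Not at hcon
  have h : ∀ t, t < N → (g t ↔ g 0) := by
    intro t
    induction t with
    | zero => intro _; rfl
    | succ t ih =>
      intro ht
      rw [← ih (by omega)]
      have := hcon t ht
      tauto
  exact hgb ((h b hb).2 ((h a ha).1 hga))

/-- boundary edges in direction `i` -/
def bdryDir (n d : ℕ) (A : Finset (GridPt n d)) (i : Fin d) :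
    Finset (GridPt n d × GridPt n d) :=
  (bdry n d A).filter fun e => e.2 i ≠ e.1 i

lemma sum_bdryDir (n d : ℕ) (A : Finset (GridPt n d)) :
    ∑ i, (bdryDir n d A i).card ≤ (bdry n d A).card := by
  unfold bdryDir
  simp only [Finset.card_filter]
  rw [Finset.sum_comm, Finset.card_eq_sum_ones]
  refine Finset.sum_le_sum fun e he => ?_
  simp only [bdry, edgePairs, Finset.mem_filter, Finset.mem_univ, true_and] at he
  obtain ⟨⟨i0, _, h0⟩, _⟩ := he
  rw [← Finset.card_filter]
  refine Finset.card_le_one.2 ?_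
  have : ∀ i, e.2 i ≠ e.1 i → i = i0 := fun i hi => by
    by_contra h; exact hi (h0 i h)
  intro a ha b hb
  simp only [Finset.mem_filter, Finset.mem_univ, true_and] at ha hb
  rw [this a ha, this b hb]

/-- lines in direction `i` fully contained in `A` -/
def fullLines (n d : ℕ) (a0 : Fin (2^n)) (A : Finset (GridPt n d)) (i : Fin d) :
    Finset (GridPt n d) :=
  (A.image (fun x => Function.update x i a0)).filter fun x => ∀ t, Function.update x i t ∈ A

lemma fullLines_card (n d : ℕ) (a0 : Fin (2^n)) (A : Finset (GridPt n d)) (i : Fin d) :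
    (fullLines n d a0 A i).card * 2^n ≤ A.card := by
  have h : ((fullLines n d a0 A i) ×ˢ (Finset.univ : Finset (Fin (2^n)))).card
      = (fullLines n d a0 A i).card * 2^n := by
    rw [Finset.card_product]; simp
  rw [← h]
  refine Finset.card_le_card_of_injOn (fun p => Function.update p.1 i p.2) ?_ ?_
  · rintro ⟨x, t⟩ hx
    have hx' := Finset.mem_coe.1 hx
    simp only [fullLines, Finset.mem_product, Finset.mem_filter] at hx'
    exact hx'.1.2 t
  · have hfix : ∀ x ∈ fullLines n d a0 A i, Function.update x i a0 = x := by
      intro x hx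
      simp only [fullLines, Finset.mem_filter, Finset.mem_image] at hx
      obtain ⟨⟨u, _, rfl⟩, _⟩ := hx
      simp
    rintro ⟨x, t⟩ hx ⟨y, s⟩ hy hxy
    have hx' := (Finset.mem_product.1 (Finset.mem_coe.1 hx)).1
    have hy' := (Finset.mem_product.1 (Finset.mem_coe.1 hy)).1
    simp only at hxy hx' hy'
    have h1 : t = s := by simpa using congrFun hxy i
    have h2 : x = y := by
      have := congrArg (fun z => Function.update z i a0) hxy
      simp only [Function.update_idem] at this
      rw [hfix x hx', hfix y hy'] at this
      exact this
    rw [h1, h2]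

lemma prj_le (n d : ℕ) (a0 : Fin (2^n)) (A : Finset (GridPt n d)) (i : Fin d) :
    prj a0 i A ≤ (bdryDir n d A i).card + (fullLines n d a0 A i).card := by
  unfold prj
  have hsub : A.image (fun x => Function.update x i a0) ⊆
      (bdryDir n d A i).image (fun e => Function.update e.1 i a0) ∪ fullLines n d a0 A i := by
    intro x hx
    by_cases hf : ∀ t, Function.update x i t ∈ A
    · exact Finset.mem_union_right _ (by
        simp only [fullLines, Finset.mem_filter]; exact ⟨hx, hf⟩)
    · refine Finset.mem_union_left _ ?_
      push Not at hf
      obtain ⟨b, hb⟩ := hf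
      obtain ⟨u, hu, rfl⟩ := Finset.mem_image.1 hx
      simp only [Function.update_idem] at hb
      obtain ⟨t, ht, hsw⟩ := exists_switch (2^n)
        (fun t => ∃ h : t < 2^n, Function.update u i (⟨t, h⟩ : Fin (2^n)) ∈ A) (u i) b
        (u i).2 b.2 ⟨(u i).2, by simpa using hu⟩ (by rintro ⟨_, h⟩; exact hb h)
      have ht' : t < 2^n := by omega
      simp only [ht, ht', exists_true_left] at hsw
      refine Finset.mem_image.2 ⟨(Function.update u i ⟨t, ht'⟩, Function.update u i ⟨t+1, ht⟩),
        ?_, by simp⟩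
      simp only [bdryDir, bdry, edgePairs, Finset.mem_filter, Finset.mem_univ, true_and]
      refine ⟨⟨⟨i, by simp, ?_⟩, hsw⟩, by simp⟩
      intro j hj
      simp [Function.update_of_ne hj]
  refine (Finset.card_le_card hsub).trans ((Finset.card_union_le _ _).trans ?_)
  exact Nat.add_le_add_right Finset.card_image_le _

lemma iso (n D : ℕ) (A : Finset (GridPt n (D+1))) (hA : A.Nonempty) :
    (Vol n (D+1) A)^D ≤ (Per n (D+1) A + Vol n (D+1) A)^(D+1) := by
  let a0 : Fin (2^n) := ⟨0, by positivity⟩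
  have hlw := loomis_whitney a0 D A hA
  have ham := amgm_fin D (fun i => (prj a0 i A : ℝ)) (fun i => by positivity)
  have hN : (0:ℝ) < 2^n := by positivity
  have hD : (0:ℝ) < (D:ℝ)+1 := by positivity
  have hsum : ∑ i, (prj a0 i A : ℝ) ≤ (bdry n (D+1) A).card + (D+1) * (A.card / 2^n) := by
    have h1 : ∀ i : Fin (D+1), (prj a0 i A : ℝ) ≤ (bdryDir n (D+1) A i).card + A.card / 2^n := by
      intro i
      have e1 : (prj a0 i A : ℝ) ≤ (bdryDir n (D+1) A i).card + (fullLines n (D+1) a0 A i).card := by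
        exact_mod_cast prj_le n (D+1) a0 A i
      have e2 : ((fullLines n (D+1) a0 A i).card : ℝ) ≤ A.card / 2^n := by
        rw [le_div_iff₀ hN]
        exact_mod_cast fullLines_card n (D+1) a0 A i
      linarith
    refine (Finset.sum_le_sum fun i _ => h1 i).trans ?_
    rw [Finset.sum_add_distrib]
    have h2 : ∑ i, ((bdryDir n (D+1) A i).card : ℝ) ≤ (bdry n (D+1) A).card := by
      exact_mod_cast sum_bdryDir n (D+1) A
    simp
    linarith
  have hV : (A.card : ℝ) = Vol n (D+1) A * 2^(n*(D+1)) := by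
    unfold Vol; field_simp
  have hP : ((bdry n (D+1) A).card + (D+1) * (A.card / 2^n)) / ((D:ℝ)+1)
      = 2^(n*D) * (Per n (D+1) A + Vol n (D+1) A) := by
    unfold Per Vol
    simp only [Nat.add_sub_cancel]
    rw [mul_add n D 1, pow_add, mul_one]
    push_cast
    field_simp
    try ring
  have hs0 : 0 ≤ ∑ i, (prj a0 i A : ℝ) := Finset.sum_nonneg fun i _ => by positivity
  have hfin : (A.card : ℝ)^D ≤ (2^(n*D) * (Per n (D+1) A + Vol n (D+1) A))^(D+1) := by
    rw [← hP]
    refine hlw.trans (ham.trans ?_)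
    exact pow_le_pow_left₀ (by positivity) (by gcongr) _
  rw [hV, mul_pow, mul_pow, ← pow_mul, ← pow_mul] at hfin
  have : n * (D+1) * D = n * D * (D+1) := by ring
  rw [this, mul_comm] at hfin
  exact le_of_mul_le_mul_left hfin (by positivity)

lemma eight_sq_le (d : ℕ) (hd : 3 ≤ d) : 8 * (d:ℝ)^2 ≤ 9 * 2^d := by
  induction d, hd using Nat.le_induction with
  | base => norm_num
  | succ d hd ih =>
    have h3 : (3:ℝ) ≤ d := by exact_mod_cast hd
    rw [pow_succ (2:ℝ) d]
    push_cast
    nlinarith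

lemma sq_step (d j i : ℕ) (hd : 3 ≤ d) (m a : ℝ) (hm : 0 < m)
    (hj : 1 / m < ((2:ℝ)^d)^(j+1))
    (ha2 : a^2 ≤ 2^(4*d) * 4^(j+5+i) * ((2:ℝ)^((j+5+i)*d))⁻¹ * m) :
    a^2 ≤ (m * 2^(j+5) * (3/4)^i)^2 * (8/2^d)^i := by
  have h1 : m ≤ m^2 * ((2:ℝ)^d)^(j+1) := by
    rw [div_lt_iff₀ hm] at hj
    nlinarith
  have h2 : a^2 ≤ 2^(4*d) * 4^(j+5+i) * ((2:ℝ)^((j+5+i)*d))⁻¹ * (m^2 * ((2:ℝ)^d)^(j+1)) :=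
    ha2.trans (mul_le_mul_of_nonneg_left h1 (by positivity))
  have h3 : 2^(4*d) * 4^(j+5+i) * ((2:ℝ)^((j+5+i)*d))⁻¹ * (m^2 * ((2:ℝ)^d)^(j+1))
      = m^2 * (4^(j+5) * ((1/2)^i * (8/2^d)^i)) := by
    have e1 : (2:ℝ)^((j+5+i)*d) = 2^(4*d) * ((2:ℝ)^d)^(j+1) * ((2:ℝ)^d)^i := by
      rw [← pow_mul, ← pow_mul, ← pow_add, ← pow_add]; congr 1; ring
    have e2 : (1/2:ℝ)^i * (8/2^d)^i = 4^i / ((2:ℝ)^d)^i := by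
      rw [← mul_pow, ← div_pow]; congr 1; ring
    rw [e1, e2, pow_add 4 (j+5) i]
    field_simp
  have e4 : ((2:ℝ)^(j+5))^2 = 4^(j+5) := by rw [← pow_mul, mul_comm, pow_mul]; norm_num
  have e5 : (((3:ℝ)/4)^i)^2 = (9/16)^i := by rw [← pow_mul, mul_comm, pow_mul]; norm_num
  rw [h3] at h2
  refine h2.trans ?_
  rw [mul_pow, mul_pow, e4, e5]
  have h5 : ((1:ℝ)/2)^i ≤ (9/16)^i := pow_le_pow_left₀ (by norm_num) (by norm_num) _
  calc m^2 * (4^(j+5) * ((1/2)^i * (8/2^d)^i)) ≤ m^2 * (4^(j+5) * ((9/16)^i * (8/2^d)^i)) := by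
        gcongr
    _ = _ := by ring

lemma eight_div_le_one (d : ℕ) (hd : 3 ≤ d) : (8:ℝ)/2^d ≤ 1 := by
  rw [div_le_one (by positivity)]
  calc (8:ℝ) = 2^3 := by norm_num
    _ ≤ 2^d := pow_le_pow_right₀ (by norm_num) hd

lemma geo34 (N : ℕ) : ∑ i ∈ Finset.range N, ((3:ℝ)/4)^i ≤ 4 := by
  rw [geom_sum_eq (by norm_num)]
  have : (0:ℝ) ≤ (3/4)^N := by positivity
  rw [div_le_iff_of_neg (by norm_num)]
  linarith

lemma geo2 (N : ℕ) : ∑ i ∈ Finset.range N, (2:ℝ)^i ≤ 2^N := by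
  rw [geom_sum_eq (by norm_num)]
  norm_num

lemma sum_big (n j : ℕ) (m : ℝ) (hm : 0 < m) (a : ℕ → ℝ)
    (h1 : ∀ k ∈ Finset.Icc 8 n, a k ≤ 2^(k+1) * m)
    (h2 : ∀ i, j+5+i ∈ Finset.Icc 8 n → a (j+5+i) ≤ m * 2^(j+5) * (3/4)^i) :
    ∑ k ∈ Finset.Icc 8 n, a k ≤ 2^(j+8) * m := by
  let B : ℕ → ℝ := fun k => if k < j+5 then 2^(k+1) * m else m * 2^(j+5) * (3/4)^(k-(j+5))
  have hB0 : ∀ k, 0 ≤ B k := by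
    intro k; simp only [B]; split_ifs <;> positivity
  have hB : ∀ k ∈ Finset.Icc 8 n, a k ≤ B k := by
    intro k hk
    simp only [B]
    split_ifs with h
    · exact h1 k hk
    · have e : j + 5 + (k - (j+5)) = k := by omega
      have := h2 (k-(j+5)) (by rw [e]; exact hk)
      rwa [e] at this
  calc ∑ k ∈ Finset.Icc 8 n, a k ≤ ∑ k ∈ Finset.Icc 8 n, B k := Finset.sum_le_sum hB
    _ ≤ ∑ k ∈ Finset.range ((j+5) + (n+1)), B k := by
        refine Finset.sum_le_sum_of_subset_of_nonneg ?_ fun k _ _ => hB0 k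
        intro k hk
        simp only [Finset.mem_Icc] at hk
        simp only [Finset.mem_range]; omega
    _ = ∑ k ∈ Finset.range (j+5), B k + ∑ i ∈ Finset.range (n+1), B (j+5+i) :=
        Finset.sum_range_add _ _ _
    _ ≤ 2^(j+6) * m + m * 2^(j+5) * 4 := by
        refine add_le_add ?_ ?_
        · have : ∑ k ∈ Finset.range (j+5), B k = (2 * m) * ∑ k ∈ Finset.range (j+5), (2:ℝ)^k := by
            rw [Finset.mul_sum]
            refine Finset.sum_congr rfl fun k hk => ?_
            simp only [B, if_pos (Finset.mem_range.1 hk)]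
            ring
          rw [this]
          refine (mul_le_mul_of_nonneg_left (geo2 _) (by positivity)).trans (le_of_eq ?_)
          ring
        · have : ∑ i ∈ Finset.range (n+1), B (j+5+i)
              = (m * 2^(j+5)) * ∑ i ∈ Finset.range (n+1), ((3:ℝ)/4)^i := by
            rw [Finset.mul_sum]
            refine Finset.sum_congr rfl fun i _ => ?_
            have : ¬ (j+5+i < j+5) := by omega
            simp only [B, if_neg this]
            congr 2; omega
          rw [this]
          exact mul_le_mul_of_nonneg_left (geo34 _) (by positivity)
    _ ≤ 2^(j+8) * m := by
        have : (0:ℝ) < 2^j * m := by positivity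
        ring_nf; nlinarith

lemma numeric (n d : ℕ) (hd : 3 ≤ d) (m P : ℝ) (hm : 0 < m) (hm2 : m ≤ 1/2) (hP : 0 ≤ P)
    (hiso : m^(d-1) ≤ (P + m)^d) (a : ℕ → ℝ)
    (h1 : ∀ k ∈ Finset.Icc 8 n, a k ≤ 2^(k+1) * m)
    (h2 : ∀ k ∈ Finset.Icc 8 n, a k ^ 2 ≤ 2^(4*d) * 4^k * ((2:ℝ)^(k*d))⁻¹ * m) :
    ∑ k ∈ Finset.Icc 8 n, a k ≤ 1000 * P := by
  have hd0 : (0:ℝ) < d := by exact_mod_cast (by omega : 0 < d)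
  have hd1 : (1:ℝ) < 2^d := one_lt_pow₀ (by norm_num) (by omega)
  have hm1 : 1 ≤ 1 / m := by rw [le_div_iff₀ hm]; linarith
  obtain ⟨j, hj1, hj2⟩ := exists_nat_pow_near hm1 hd1
  have hmd : m^(d-1) = m^d * (1/m) := by
    obtain ⟨D, rfl⟩ : ∃ D, d = D + 1 := ⟨d-1, by omega⟩
    rw [Nat.add_sub_cancel, pow_succ]; field_simp
  rw [hmd] at hiso
  rcases Nat.eq_zero_or_pos j with rfl | hjpos
  · -- small case
    have hPm : m / (2*d) ≤ P := by
      have hb : (m * (1 + 1/(2*d)))^d ≤ (P+m)^d := by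
        refine le_trans ?_ hiso
        rw [mul_pow]
        refine mul_le_mul_of_nonneg_left ?_ (by positivity)
        have e1 : (1 + 1/(2*(d:ℝ)))^d ≤ Real.exp (1/2) := by
          have := Real.add_one_le_exp (1/(2*(d:ℝ)))
          calc (1 + 1/(2*(d:ℝ)))^d ≤ (Real.exp (1/(2*(d:ℝ))))^d :=
                pow_le_pow_left₀ (by positivity) (by linarith) _
            _ = Real.exp (1/2) := by
                rw [← Real.exp_nat_mul]; congr 1; field_simp
        have e2 : Real.exp (1/2) ≤ 2 := by
          have h := Real.exp_one_lt_d9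
          have h' : Real.exp (1/2) ^ 2 = Real.exp 1 := by
            rw [← Real.exp_nat_mul]; norm_num
          have := Real.exp_pos (1/2)
          nlinarith
        have e3 : 2 ≤ 1/m := by rw [le_div_iff₀ hm]; linarith
        linarith
      have := le_of_pow_le_pow_left₀ (by omega) (by positivity) hb
      have e : m * (1 + 1/(2*(d:ℝ))) = m + m/(2*d) := by ring
      rw [e] at this; linarith
    have hterm : ∀ k ∈ Finset.Icc 8 n, a k ≤ (96 * m / d) * (3/4)^(k-5) := by
      intro k hk
      have hk8 : 8 ≤ k := (Finset.mem_Icc.1 hk).1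
      have e : 0 + 5 + (k-5) = k := by omega
      have hs := sq_step d 0 (k-5) hd m (a k) hm hj2 (by rw [e]; exact h2 k hk)
      refine le_of_sq_le_sq ?_ (by positivity)
      refine hs.trans ?_
      have h8 : ((8:ℝ)/2^d)^(k-5) ≤ 9 / d^2 := by
        calc ((8:ℝ)/2^d)^(k-5) ≤ ((8:ℝ)/2^d)^1 :=
              pow_le_pow_of_le_one (by positivity) (eight_div_le_one d hd) (by omega)
          _ ≤ 9 / d^2 := by
              rw [pow_one, div_le_div_iff₀ (by positivity) (by positivity)]
              exact eight_sq_le d hd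
      refine (mul_le_mul_of_nonneg_left h8 (by positivity)).trans (le_of_eq ?_)
      field_simp
      norm_num
    calc ∑ k ∈ Finset.Icc 8 n, a k
        ≤ ∑ k ∈ Finset.Icc 8 n, (96 * m / d) * (3/4)^(k-5) := Finset.sum_le_sum hterm
      _ ≤ ∑ k ∈ Finset.range (5 + (n+1)), (if k < 5 then 0 else (96 * m / d) * (3/4)^(k-5)) := by
          refine (Finset.sum_congr rfl (g := fun k => if k < 5 then (0:ℝ) else
            (96 * m / d) * (3/4)^(k-5)) fun k hk => ?_).trans_le ?_
          · have : ¬ k < 5 := by have := (Finset.mem_Icc.1 hk).1; omega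
            rw [if_neg this]
          · refine Finset.sum_le_sum_of_subset_of_nonneg ?_ fun k _ _ => ?_
            · intro k hk
              simp only [Finset.mem_Icc] at hk
              simp only [Finset.mem_range]; omega
            · split_ifs <;> positivity
      _ = (96 * m / d) * ∑ i ∈ Finset.range (n+1), ((3:ℝ)/4)^i := by
          rw [Finset.sum_range_add, Finset.mul_sum]
          rw [Finset.sum_eq_zero, zero_add]
          · refine Finset.sum_congr rfl fun i _ => ?_
            rw [if_neg (by omega)]
            congr 2; omega
          · intro k hk
            rw [if_pos (Finset.mem_range.1 hk)]
      _ ≤ (96 * m / d) * 4 := mul_le_mul_of_nonneg_left (geo34 _) (by positivity)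
      _ = 768 * (m / (2*d)) := by ring
      _ ≤ 1000 * P := by linarith
  · have hPm : m * 2^j ≤ P + m := by
      refine le_of_pow_le_pow_left₀ (n := d) (by omega) (by positivity) ?_
      refine le_trans ?_ hiso
      rw [mul_pow]
      refine mul_le_mul_of_nonneg_left ?_ (by positivity)
      rw [← pow_mul, mul_comm, pow_mul]; exact hj1
    have h2j : (2:ℝ) ≤ 2^j := by
      calc (2:ℝ) = 2^1 := by norm_num
        _ ≤ 2^j := pow_le_pow_right₀ (by norm_num) hjpos
    have hs := sum_big n j m hm a h1 (by
      intro i hi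
      refine le_of_sq_le_sq ?_ (by positivity)
      refine (sq_step d j i hd m _ hm hj2 (h2 _ hi)).trans ?_
      exact mul_le_of_le_one_right (by positivity)
        (pow_le_one₀ (by positivity) (eight_div_le_one d hd)))
    refine hs.trans ?_
    rw [pow_add]
    nlinarith

lemma per_nonneg (n d : ℕ) (A : Finset (GridPt n d)) : 0 ≤ Per n d A := by
  unfold Per; positivity

lemma half_case (n d : ℕ) (hd : 3 ≤ d) (A : Finset (GridPt n d)) (hA : Vol n d A ≤ 1/2) :
    ∑ k ∈ Finset.Icc 8 n, ∫ ω, |nuMeas n d k A ω| ∂(prodMeasure d k) ≤ 1000 * Per n d A := by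
  rcases A.eq_empty_or_nonempty with rfl | hne
  · have : ∀ k (ω : CubeIdx d k → ℝ), nuMeas n d k ∅ ω = 0 := by
      intro k ω; simp [nuMeas, muMeas, Vol]
    simp only [this, abs_zero, integral_zero, Finset.sum_const_zero]
    have := per_nonneg n d ∅
    positivity
  · have hm : 0 < Vol n d A := by
      unfold Vol
      have := Finset.card_pos.2 hne
      positivity
    refine numeric n d hd _ _ hm hA (per_nonneg n d A) ?_ _
      (fun k hk => nu_L1 n d k (Finset.mem_Icc.1 hk).2 A)
      (fun k hk => nu_L2 n d k (Finset.mem_Icc.1 hk).2 A)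
    obtain ⟨D, rfl⟩ : ∃ D, d = D + 1 := ⟨d-1, by omega⟩
    exact iso n D A hne

lemma vol_compl (n d : ℕ) (A : Finset (GridPt n d)) : Vol n d Aᶜ = 1 - Vol n d A := by
  unfold Vol
  rw [Finset.card_compl, Nat.cast_sub (Finset.card_le_univ A)]
  have : (Fintype.card (GridPt n d) : ℝ) = 2^(n*d) := by simp [← pow_mul]
  rw [this, sub_div, div_self (by positivity)]

lemma vol_compl_inter (n d : ℕ) (A B : Finset (GridPt n d)) :
    Vol n d (Aᶜ ∩ B) = Vol n d (Finset.univ ∩ B) - Vol n d (A ∩ B) := by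
  unfold Vol
  rw [← sub_div]
  congr 1
  have : ((Aᶜ ∩ B).card : ℝ) + (A ∩ B).card = B.card := by
    have h := Finset.card_sdiff_add_card_inter B A
    have e : Aᶜ ∩ B = B \ A := by ext; simp [and_comm]
    rw [e, Finset.inter_comm A B]
    exact_mod_cast h
  rw [Finset.univ_inter]; linarith

lemma nu_compl (n d k : ℕ) (A : Finset (GridPt n d)) (ω : CubeIdx d k → ℝ) :
    nuMeas n d k Aᶜ ω = - nuMeas n d k A ω := by
  have : muMeas n d k Aᶜ ω = muMeas n d k Finset.univ ω - muMeas n d k A ω := by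
    unfold muMeas
    rw [← Finset.sum_sub_distrib]
    refine Finset.sum_congr rfl fun j _ => ?_
    rw [vol_compl_inter]; ring
  unfold nuMeas
  rw [this, vol_compl]; ring

lemma per_compl (n d : ℕ) (A : Finset (GridPt n d)) : Per n d Aᶜ = Per n d A := by
  have : bdry n d Aᶜ = bdry n d A := by
    ext e
    simp only [bdry, Finset.mem_filter, Finset.mem_compl]
    tauto
  unfold Per
  rw [this]

/-- Sobolev inequality for indicator functions: there is a universal constant `C`
(independent of `n, d`) with `∑_{k=8}^n E[|ν_k(A)|] ≤ C·Per(A)` for every `A ⊆ [2^n]^d`. -/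
theorem sobolev_indicator :
    ∃ C : ℝ, ∀ (n d : ℕ), 8 ≤ n → 3 ≤ d → ∀ A : Finset (GridPt n d),
      ∑ k ∈ Finset.Icc 8 n, ∫ ω, |nuMeas n d k A ω| ∂(prodMeasure d k)
        ≤ C * Per n d A := by
  refine ⟨1000, fun n d _ hd A => ?_⟩
  by_cases h : Vol n d A ≤ 1/2
  · exact half_case n d hd A h
  · have hc := half_case n d hd Aᶜ (by rw [vol_compl]; linarith)
    rw [per_compl] at hc
    simpa only [nu_compl, abs_neg] using hc
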